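/- Let D = (1/2)·∑_x |p_x − p̃_x| be the total variation distance between the target quasi-probability mixture p and the signed empirical estimator p̃ built from N i.i.d. samples. Then for every t > 0, P( |D − E[D]| ≥ t ) ≤ 2·exp( −N·t² / (2γ²) ). (Concentration of the total variation distance via the bounded-differences inequality: changing any single sample changes D by at most 2γ/N.) -/

import Mathlib

open MeasureTheory Finset

/-!
Replacing one sample moves at most two coordinates of `p̃`, by a total of at most `2γ/N`, so by the
reverse triangle inequality it changes `D`, which is half an `ℓ¹`-distance, by at most `γ/N`.
McDiarmid's inequality then makes `D - E[D]` sub-Gaussian with variance proxy `γ²/(4N)`, which even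
gives the exponent `-2Nt²/γ²`.

McDiarmid's inequality is proved by induction on the number of coordinates: `F - E[F]` is the sum of
`G - E[G]`, where `G` integrates out all coordinates but the first and is handled by Hoeffding's
lemma, and of `F - G`, to whose sections at a fixed first coordinate the induction applies.

The σ-algebra on `ι` is arbitrary, so `D` need not be measurable. It is almost everywhere
measurable because the atoms of a sample exhaust its total mass, which makes every set
null-measurable.
-/

open ProbabilityTheory Function
open scoped NNReal ENNReal

section SubGaussian

variable {α β : Type*} {mα : MeasurableSpace α} {mβ : MeasurableSpace β}
  {μ : Measure α} {ν : Measure β}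

lemma hasSubgaussianMGF_sub_integral_of_abs_sub_le [IsProbabilityMeasure μ] {X : α → ℝ} {c : ℝ≥0}
    (hX : AEMeasurable X μ) (hc : ∀ x y, |X x - X y| ≤ c) :
    HasSubgaussianMGF (fun x ↦ X x - ∫ y, X y ∂μ) ((c / 2) ^ 2) μ := by
  have : Nonempty α := μ.nonempty_of_neZero
  have hbdd : BddBelow (Set.range X) := by
    let x₀ : α := Classical.arbitrary α
    refine ⟨X x₀ - c, ?_⟩
    rintro _ ⟨x, rfl⟩
    linarith [(abs_le.1 (hc x x₀)).1]
  have hmem : ∀ x, X x ∈ Set.Icc (⨅ y, X y) ((⨅ y, X y) + c) := by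
    refine fun x ↦ ⟨ciInf_le hbdd x, ?_⟩
    have : X x - c ≤ ⨅ y, X y := le_ciInf fun y ↦ by linarith [(abs_le.1 (hc x y)).2]
    linarith
  simpa using hasSubgaussianMGF_of_mem_Icc hX (ae_of_all μ hmem)

lemma hasSubgaussianMGF_prod_add [SFinite μ] [SFinite ν] {X : α → ℝ} {Y : α × β → ℝ} {cX cY : ℝ≥0}
    (hX : HasSubgaussianMGF X cX μ) (hYm : AEMeasurable Y (μ.prod ν))
    (hY : ∀ᵐ a ∂μ, HasSubgaussianMGF (fun b ↦ Y (a, b)) cY ν) :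
    HasSubgaussianMGF (fun z ↦ X z.1 + Y z) (cX + cY) (μ.prod ν) := by
  have mgf_section_le (t : ℝ) : ∀ᵐ a ∂μ, ∫ b, Real.exp (t * (X a + Y (a, b))) ∂ν ≤
      Real.exp (t * X a) * Real.exp (cY * t ^ 2 / 2) := by
    filter_upwards [hY] with a ha
    simp_rw [mul_add, Real.exp_add, integral_const_mul]
    gcongr
    exact ha.mgf_le t
  have integrable_bound (t : ℝ) :
      Integrable (fun a ↦ Real.exp (t * X a) * Real.exp (cY * t ^ 2 / 2)) μ :=
    (hX.integrable_exp_mul t).mul_const _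
  have integrable_exp (t : ℝ) :
      Integrable (fun z : α × β ↦ Real.exp (t * (X z.1 + Y z))) (μ.prod ν) := by
    have hm : AEStronglyMeasurable (fun z : α × β ↦ Real.exp (t * (X z.1 + Y z))) (μ.prod ν) :=
      (Real.measurable_exp.comp_aemeasurable
        ((hX.aemeasurable.comp_fst.add hYm).const_mul t)).aestronglyMeasurable
    refine (integrable_prod_iff hm).2
      ⟨?_, (integrable_bound t).mono' hm.norm.integral_prod_right' ?_⟩
    · filter_upwards [hY] with a ha
      simp_rw [mul_add, Real.exp_add]
      exact (ha.integrable_exp_mul t).const_mul _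
    · filter_upwards [mgf_section_le t] with a ha
      simp_rw [Real.norm_of_nonneg (Real.exp_pos _).le]
      rwa [Real.norm_of_nonneg (integral_nonneg fun _ ↦ (Real.exp_pos _).le)]
  refine ⟨integrable_exp, fun t ↦ ?_⟩
  calc mgf (fun z ↦ X z.1 + Y z) (μ.prod ν) t
      = ∫ a, ∫ b, Real.exp (t * (X a + Y (a, b))) ∂ν ∂μ := integral_prod _ (integrable_exp t)
    _ ≤ ∫ a, Real.exp (t * X a) * Real.exp (cY * t ^ 2 / 2) ∂μ :=
        integral_mono_ae (integrable_exp t).integral_prod_left (integrable_bound t)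
          (mgf_section_le t)
    _ = mgf X μ t * Real.exp (cY * t ^ 2 / 2) := integral_mul_const _ _
    _ ≤ Real.exp (cX * t ^ 2 / 2) * Real.exp (cY * t ^ 2 / 2) := by
        gcongr
        exact hX.mgf_le t
    _ = Real.exp ((cX + cY : ℝ≥0) * t ^ 2 / 2) := by
        rw [← Real.exp_add]
        push_cast
        ring_nf

lemma integrable_of_hasSubgaussianMGF_sub_const [IsFiniteMeasure μ] {X : α → ℝ} {c : ℝ≥0} {r : ℝ}
    (hX : HasSubgaussianMGF (fun x ↦ X x - r) c μ) : Integrable X μ := by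
  simpa [Pi.add_def] using hX.integrable.add (integrable_const r)

lemma hasSubgaussianMGF_prod_sub_integral [IsFiniteMeasure μ] [IsFiniteMeasure ν] {H : α × β → ℝ}
    {cX cY : ℝ≥0} (hH : Measurable H)
    (hmarginal : HasSubgaussianMGF
      (fun a ↦ ∫ b, H (a, b) ∂ν - ∫ a', ∫ b, H (a', b) ∂ν ∂μ) cX μ)
    (hsection : ∀ a, HasSubgaussianMGF (fun b ↦ H (a, b) - ∫ b', H (a, b') ∂ν) cY ν) :
    HasSubgaussianMGF (fun z ↦ H z - ∫ z', H z' ∂μ.prod ν) (cX + cY) (μ.prod ν) := by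
  have hG : Measurable fun a ↦ ∫ b, H (a, b) ∂ν :=
    hH.stronglyMeasurable.integral_prod_right'.measurable
  have centered : HasSubgaussianMGF (fun z ↦ H z - ∫ a, ∫ b, H (a, b) ∂ν ∂μ) (cX + cY)
      (μ.prod ν) := by
    have := hasSubgaussianMGF_prod_add (Y := fun z ↦ H z - ∫ b, H (z.1, b) ∂ν) hmarginal
      (hH.sub (hG.comp measurable_fst)).aemeasurable (ae_of_all μ hsection)
    exact this.congr (ae_of_all _ fun z ↦ by ring)
  rwa [integral_prod H (integrable_of_hasSubgaussianMGF_sub_const centered)]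

lemma hasSubgaussianMGF_sub_integral_of_measurePreserving {e : α ≃ᵐ β}
    (he : MeasurePreserving e μ ν) {X : α → ℝ} {c : ℝ≥0}
    (hX : HasSubgaussianMGF (fun y ↦ X (e.symm y) - ∫ y', X (e.symm y') ∂ν) c ν) :
    HasSubgaussianMGF (fun x ↦ X x - ∫ x', X x' ∂μ) c μ := by
  rw [he.symm.integral_comp', ← he.map_eq] at hX
  simpa only [comp_def, e.symm_apply_apply] using hX.of_map he.aemeasurable

lemma measureReal_le_abs_le_of_hasSubgaussianMGF {X : α → ℝ} {c : ℝ≥0}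
    (hX : HasSubgaussianMGF X c μ) {t : ℝ} (ht : 0 ≤ t) :
    μ.real {x | t ≤ |X x|} ≤ 2 * Real.exp (-t ^ 2 / (2 * c)) := by
  have hunion : {x | t ≤ |X x|} = {x | t ≤ X x} ∪ {x | t ≤ (-X) x} := by
    ext x
    exact le_abs (a := t) (b := X x)
  rw [hunion, two_mul]
  exact (measureReal_union_le _ _).trans
    (add_le_add (hX.measure_ge_le ht) (hX.neg.measure_ge_le ht))

end SubGaussian

/-- The bounded-differences condition of McDiarmid's inequality: changing the `i`-th coordinate
alone changes the value of `F` by at most `c i`. -/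
def HasBoundedDifferences {κ : Type*} [DecidableEq κ] {E : κ → Type*} (F : (∀ i, E i) → ℝ)
    (c : κ → ℝ≥0) : Prop :=
  ∀ (ω : ∀ i, E i) (i : κ) (a : E i), |F (update ω i a) - F ω| ≤ c i

namespace HasBoundedDifferences

section Fin

variable {n : ℕ} {E : Fin (n + 1) → Type*} {F : (∀ i, E i) → ℝ} {c : Fin (n + 1) → ℝ≥0}

lemma comp_insertNth (hF : HasBoundedDifferences F c) (i : Fin (n + 1)) (x : E i) :
    HasBoundedDifferences (fun ω ↦ F (i.insertNth x ω)) (fun j ↦ c (i.succAbove j)) := by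
  intro ω j a
  simpa only [Fin.insertNth_update] using hF (i.insertNth x ω) (i.succAbove j) a

lemma abs_sub_insertNth_le (hF : HasBoundedDifferences F c) (i : Fin (n + 1)) (x y : E i)
    (ω : ∀ j, E (i.succAbove j)) : |F (i.insertNth x ω) - F (i.insertNth y ω)| ≤ c i := by
  simpa only [Fin.update_insertNth] using hF (i.insertNth y ω) i x

lemma abs_integral_insertNth_sub_le (hF : HasBoundedDifferences F c) (i : Fin (n + 1))
    [∀ j, MeasurableSpace (E (i.succAbove j))] {ν : Measure (∀ j, E (i.succAbove j))}
    [IsProbabilityMeasure ν] (hint : ∀ x, Integrable (fun ω ↦ F (i.insertNth x ω)) ν) (x y : E i) :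
    |∫ ω, F (i.insertNth x ω) ∂ν - ∫ ω, F (i.insertNth y ω) ∂ν| ≤ c i := by
  rw [← integral_sub (hint x) (hint y), ← Real.norm_eq_abs]
  have pointwise (ω : ∀ j, E (i.succAbove j)) : ‖F (i.insertNth x ω) - F (i.insertNth y ω)‖ ≤ c i :=
    hF.abs_sub_insertNth_le i x y ω
  simpa using norm_integral_le_of_norm_le_const (ae_of_all ν pointwise)

end Fin

lemma comp_piCongrLeft {κ κ' : Type*} [DecidableEq κ] [DecidableEq κ'] {E : κ → Type*}
    {F : (∀ i, E i) → ℝ} {c : κ → ℝ≥0} (hF : HasBoundedDifferences F c) (e : κ' ≃ κ) :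
    HasBoundedDifferences (fun ω ↦ F (e.piCongrLeft E ω)) (fun j ↦ c (e j)) := by
  intro ω j a
  have hupdate : e.piCongrLeft E (update ω j a) = update (e.piCongrLeft E ω) (e j) a :=
    Function.piCongrLeft'_symm_update E e.symm ω j a
  simpa only [hupdate] using hF (e.piCongrLeft E ω) (e j) a

lemma hasSubgaussianMGF_pi_fin {n : ℕ} {E : Fin n → Type*} {mE : ∀ i, MeasurableSpace (E i)}
    {F : (∀ i, E i) → ℝ} {c : Fin n → ℝ≥0} (hF : HasBoundedDifferences F c) (hFm : Measurable F)
    (μ : ∀ i, Measure (E i)) [∀ i, IsProbabilityMeasure (μ i)] :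
    HasSubgaussianMGF (fun ω ↦ F ω - ∫ ω', F ω' ∂Measure.pi μ) (∑ i, (c i / 2) ^ 2)
      (Measure.pi μ) := by
  induction n with
  | zero => simp [integral_unique, Subsingleton.elim _ (default : ∀ i, E i)]
  | succ n ih =>
    let ν := Measure.pi fun j ↦ μ (Fin.succAbove 0 j)
    let e := MeasurableEquiv.piFinSuccAbove E 0
    have he : MeasurePreserving e (Measure.pi μ) ((μ 0).prod ν) :=
      measurePreserving_piFinSuccAbove μ 0
    have hH : Measurable (F ∘ e.symm) := hFm.comp e.symm.measurable
    have hsection (x : E 0) : HasSubgaussianMGF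
        (fun ω ↦ F (e.symm (x, ω)) - ∫ ω', F (e.symm (x, ω')) ∂ν)
        (∑ j, (c (Fin.succAbove 0 j) / 2) ^ 2) ν :=
      ih (hF.comp_insertNth 0 x) (hH.comp measurable_prodMk_left) _
    have hmarginal : HasSubgaussianMGF
        (fun x ↦ ∫ ω, F (e.symm (x, ω)) ∂ν - ∫ x', ∫ ω, F (e.symm (x', ω)) ∂ν ∂μ 0)
        ((c 0 / 2) ^ 2) (μ 0) :=
      hasSubgaussianMGF_sub_integral_of_abs_sub_le
        hH.stronglyMeasurable.integral_prod_right'.measurable.aemeasurable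
        (hF.abs_integral_insertNth_sub_le 0
          fun x ↦ integrable_of_hasSubgaussianMGF_sub_const (hsection x))
    rw [Fin.sum_univ_succ]
    exact hasSubgaussianMGF_sub_integral_of_measurePreserving he
      (hasSubgaussianMGF_prod_sub_integral hH hmarginal hsection)

section Fintype

variable {κ : Type*} [Fintype κ] [DecidableEq κ] {E : κ → Type*} {F : (∀ i, E i) → ℝ}
  {c : κ → ℝ≥0}

theorem hasSubgaussianMGF_pi {mE : ∀ i, MeasurableSpace (E i)} (hF : HasBoundedDifferences F c)
    (hFm : Measurable F) (μ : ∀ i, Measure (E i)) [∀ i, IsProbabilityMeasure (μ i)] :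
    HasSubgaussianMGF (fun ω ↦ F ω - ∫ ω', F ω' ∂Measure.pi μ) (∑ i, (c i / 2) ^ 2)
      (Measure.pi μ) := by
  let e := (Fintype.equivFin κ).symm
  have he : MeasurePreserving (MeasurableEquiv.piCongrLeft E e) (Measure.pi fun j ↦ μ (e j))
      (Measure.pi μ) := measurePreserving_piCongrLeft μ e
  have hfin := (hF.comp_piCongrLeft e).hasSubgaussianMGF_pi_fin
    (hFm.comp (MeasurableEquiv.piCongrLeft E e).measurable) fun j ↦ μ (e j)
  rw [Equiv.sum_comp e fun i ↦ (c i / 2) ^ 2] at hfin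
  exact hasSubgaussianMGF_sub_integral_of_measurePreserving he.symm hfin

theorem hasSubgaussianMGF_of_iIndepFun {Ω : Type*} {mΩ : MeasurableSpace Ω} {P : Measure Ω}
    [IsProbabilityMeasure P] {mE : ∀ i, MeasurableSpace (E i)} {X : ∀ i, Ω → E i}
    (hF : HasBoundedDifferences F c) (hFm : Measurable F) (hX : ∀ i, AEMeasurable (X i) P)
    (hindep : iIndepFun X P) :
    HasSubgaussianMGF (fun ω ↦ F (fun i ↦ X i ω) - ∫ ω', F (fun i ↦ X i ω') ∂P)
      (∑ i, (c i / 2) ^ 2) P := by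
  have hXm : AEMeasurable (fun ω i ↦ X i ω) P := aemeasurable_pi_lambda _ hX
  have (i : κ) : IsProbabilityMeasure (P.map (X i)) := Measure.isProbabilityMeasure_map (hX i)
  have := hF.hasSubgaussianMGF_pi hFm fun i ↦ P.map (X i)
  rw [← hindep.map_fun_eq_pi_map hX, integral_map hXm hFm.aestronglyMeasurable] at this
  exact this.of_map hXm

theorem hasSubgaussianMGF_pi_comp_of_nullMeasurable {Ω : κ → Type*}
    [∀ i, MeasurableSpace (Ω i)] {μ : ∀ i, Measure (Ω i)} [∀ i, IsProbabilityMeasure (μ i)]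
    [mE : ∀ i, MeasurableSpace (E i)] [∀ i, Countable (E i)] [∀ i, DiscreteMeasurableSpace (E i)]
    {X : ∀ i, Ω i → E i} (hF : HasBoundedDifferences F c)
    (hX : ∀ i, NullMeasurable (X i) (μ i)) :
    HasSubgaussianMGF
      (fun ω ↦ F (fun i ↦ X i (ω i)) - ∫ ω', F (fun i ↦ X i (ω' i)) ∂Measure.pi μ)
      (∑ i, (c i / 2) ^ 2) (Measure.pi μ) :=
  hF.hasSubgaussianMGF_of_iIndepFun .of_discrete
    (fun i ↦ (hX i).aemeasurable.comp_quasiMeasurePreserving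
      (Measure.quasiMeasurePreserving_eval μ i))
    (iIndepFun_pi fun i ↦ (hX i).aemeasurable)

end Fintype

end HasBoundedDifferences

section NullMeasurable

variable {α : Type*} [MeasurableSpace α] {μ : Measure α} [IsFiniteMeasure μ]

lemma nullMeasurableSet_of_measure_add_measure_compl_le {s : Set α}
    (hs : μ s + μ sᶜ ≤ μ Set.univ) : NullMeasurableSet s μ := by
  set T := toMeasurable μ s
  set T' := toMeasurable μ sᶜ
  have hcover : T ∪ T' = Set.univ :=
    Set.eq_univ_of_univ_subset <| (Set.union_compl_self s).symm.subset.trans <|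
      Set.union_subset_union (subset_toMeasurable μ s) (subset_toMeasurable μ sᶜ)
  have hinter : μ (T ∩ T') = 0 := by
    have := measure_union_add_inter (μ := μ) T (measurableSet_toMeasurable μ sᶜ)
    rw [hcover, measure_toMeasurable, measure_toMeasurable] at this
    rw [← this] at hs
    simpa using ENNReal.le_sub_of_add_le_left (measure_ne_top μ Set.univ) hs
  have hsub : T \ s ⊆ T ∩ T' := Set.inter_subset_inter_right T (subset_toMeasurable μ sᶜ)
  have hae : s =ᵐ[μ] T :=
    (subset_toMeasurable μ s).eventuallyLE.antisymm (ae_le_set.2 (measure_mono_null hsub hinter))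
  exact (measurableSet_toMeasurable μ s).nullMeasurableSet.congr hae.symm

lemma nullMeasurableSet_of_tsum_measure_singleton_le [Countable α]
    (hμ : ∑' a, μ {a} ≤ μ Set.univ) (s : Set α) : NullMeasurableSet s μ := by
  have measure_le_tsum (u : Set α) : μ u ≤ ∑' a : u, μ {(a : α)} := by
    simpa using measure_iUnion_le (μ := μ) fun a : u ↦ ({(a : α)} : Set α)
  refine nullMeasurableSet_of_measure_add_measure_compl_le ?_
  calc μ s + μ sᶜ ≤ ∑' a : s, μ {(a : α)} + ∑' a : ↥sᶜ, μ {(a : α)} :=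
        add_le_add (measure_le_tsum s) (measure_le_tsum sᶜ)
    _ = ∑' a, μ {a} :=
        ENNReal.summable.tsum_add_tsum_compl (f := fun a ↦ μ {a}) (s := s) ENNReal.summable
    _ ≤ μ Set.univ := hμ

end NullMeasurable

section TVDist

variable {ι : Type*} [Fintype ι]

/-- The total variation distance between two weight functions on a finite type, half their
`ℓ¹`-distance; the weights may be negative and need not sum to `1`. -/
noncomputable def tvDist (f g : ι → ℝ) : ℝ :=
  (1 / 2) * ∑ x, |f x - g x|

lemma abs_tvDist_sub_tvDist_le (p f g : ι → ℝ) : |tvDist p f - tvDist p g| ≤ tvDist f g := by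
  have pointwise (x : ι) : |(|p x - f x| - |p x - g x|)| ≤ |f x - g x| := by
    simpa [abs_sub_comm] using abs_abs_sub_abs_le_abs_sub (p x - f x) (p x - g x)
  rw [tvDist, tvDist, tvDist, ← mul_sub, ← sum_sub_distrib, abs_mul, abs_of_pos one_half_pos]
  gcongr
  exact (abs_sum_le_sum_abs _ _).trans (sum_le_sum fun x _ ↦ pointwise x)

end TVDist

section SignedEmpirical

variable {ι : Type*} [DecidableEq ι]

/-- The contribution of a single signed sample `(x, s)` to the signed empirical estimator: the
point mass at `x` with sign `+1` if `s = true` and `-1` if `s = false`. -/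
def signedPointMass (a : ι × Bool) (x : ι) : ℝ :=
  if a.1 = x then (if a.2 then 1 else -1) else 0

/-- The signed empirical estimator `p̃` of the samples `ω`, with overhead `γ`. -/
noncomputable def signedEmpirical (γ : ℝ) {N : ℕ} (ω : Fin N → ι × Bool) (x : ι) : ℝ :=
  (γ / N) * ∑ i, signedPointMass (ω i) x

lemma signedEmpirical_update_sub (γ : ℝ) {N : ℕ} (ω : Fin N → ι × Bool) (i : Fin N) (a : ι × Bool)
    (x : ι) : signedEmpirical γ (update ω i a) x - signedEmpirical γ ω x =
      (γ / N) * (signedPointMass a x - signedPointMass (ω i) x) := by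
  have hsum : ∑ j, (signedPointMass (update ω i a j) x - signedPointMass (ω j) x) =
      signedPointMass a x - signedPointMass (ω i) x := by
    rw [Fintype.sum_eq_single i fun j hj ↦ by rw [update_of_ne hj, sub_self], update_self]
  rw [signedEmpirical, signedEmpirical, ← mul_sub, ← sum_sub_distrib, hsum]

variable [Fintype ι]

lemma sum_abs_signedPointMass (a : ι × Bool) : ∑ x, |signedPointMass a x| = 1 := by
  have (x : ι) : |signedPointMass a x| = if a.1 = x then 1 else 0 := by
    unfold signedPointMass
    split_ifs <;> simp
  simp [this]

lemma tvDist_signedEmpirical_update_le {γ : ℝ} (hγ : 0 ≤ γ) {N : ℕ} (ω : Fin N → ι × Bool)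
    (i : Fin N) (a : ι × Bool) :
    tvDist (signedEmpirical γ (update ω i a)) (signedEmpirical γ ω) ≤ γ / N := by
  calc tvDist (signedEmpirical γ (update ω i a)) (signedEmpirical γ ω)
      = (1 / 2) * (γ / N * ∑ x, |signedPointMass a x - signedPointMass (ω i) x|) := by
        simp_rw [tvDist, signedEmpirical_update_sub, abs_mul, ← mul_sum]
        rw [abs_of_nonneg (by positivity)]
    _ ≤ (1 / 2) * (γ / N * ∑ x, (|signedPointMass a x| + |signedPointMass (ω i) x|)) := by
        gcongr
        exact abs_sub _ _
    _ = γ / N := by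
        rw [sum_add_distrib, sum_abs_signedPointMass, sum_abs_signedPointMass]
        ring

lemma hasBoundedDifferences_tvDist_signedEmpirical (p : ι → ℝ) (γ : ℝ≥0) (N : ℕ) :
    HasBoundedDifferences (fun ω : Fin N → ι × Bool ↦ tvDist p (signedEmpirical γ ω))
      (fun _ ↦ γ / N) := fun ω i a ↦
  (abs_tvDist_sub_tvDist_le p _ _).trans <| by
    simpa using tvDist_signedEmpirical_update_le γ.coe_nonneg ω i a

end SignedEmpirical

lemma sum_measure_singleton_eq_one_of_signed_mixture {ι : Type*}
    [Fintype ι] [MeasurableSpace ι] {pp pm : ι → ℝ} (hpp0 : ∀ x, 0 ≤ pp x)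
    (hpp1 : ∑ x, pp x = 1) (hpm0 : ∀ x, 0 ≤ pm x) (hpm1 : ∑ x, pm x = 1)
    {cp cm γ : ℝ} (hcp : 0 ≤ cp) (hcm : 0 ≤ cm) (hγ : γ = cp + cm) (hγ0 : 0 < γ)
    {μ : Measure (ι × Bool)} (hμt : ∀ x, μ {(x, true)} = ENNReal.ofReal (cp * pp x / γ))
    (hμf : ∀ x, μ {(x, false)} = ENNReal.ofReal (cm * pm x / γ)) : ∑ a, μ {a} = 1 := by
  have hp (x : ι) : 0 ≤ cp * pp x / γ := div_nonneg (mul_nonneg hcp (hpp0 x)) hγ0.le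
  have hm (x : ι) : 0 ≤ cm * pm x / γ := div_nonneg (mul_nonneg hcm (hpm0 x)) hγ0.le
  calc ∑ a, μ {a} = ∑ x, ENNReal.ofReal (cp * pp x / γ + cm * pm x / γ) := by
        simp_rw [Fintype.sum_prod_type, Fintype.sum_bool, hμt, hμf,
          ENNReal.ofReal_add (hp _) (hm _)]
    _ = ENNReal.ofReal ((cp * ∑ x, pp x + cm * ∑ x, pm x) / γ) := by
        rw [← ENNReal.ofReal_sum_of_nonneg fun x _ ↦ add_nonneg (hp x) (hm x), sum_add_distrib,
          ← sum_div, ← sum_div, ← mul_sum, ← mul_sum, add_div]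
    _ = 1 := by
        rw [hpp1, hpm1, mul_one, mul_one, ← hγ, div_self hγ0.ne', ENNReal.ofReal_one]

theorem tv_distance_concentration_general
    {ι : Type*} [Fintype ι] [DecidableEq ι] [MeasurableSpace ι] (p : ι → ℝ)
    {γ : ℝ} (hγ : 0 < γ) {N : ℕ} (hN : 0 < N)
    (μ : Fin N → Measure (ι × Bool)) [∀ i, IsProbabilityMeasure (μ i)]
    (hμ : ∀ i, ∑ a, μ i {a} = 1) {t : ℝ} (ht : 0 ≤ t) :
    Measure.pi μ {ω | t ≤ |tvDist p (signedEmpirical γ ω) -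
        ∫ ω', tvDist p (signedEmpirical γ ω') ∂Measure.pi μ|} ≤
      ENNReal.ofReal (2 * Real.exp (-(2 * N * t ^ 2) / γ ^ 2)) := by
  lift γ to ℝ≥0 using hγ.le
  have nullMeasurable (i : Fin N) (s : Set (ι × Bool)) : NullMeasurableSet s (μ i) :=
    nullMeasurableSet_of_tsum_measure_singleton_le (by rw [tsum_fintype, hμ, measure_univ]) s
  have subgaussian := (hasBoundedDifferences_tvDist_signedEmpirical p γ
    N).hasSubgaussianMGF_pi_comp_of_nullMeasurable (mE := fun _ ↦ ⊤) (X := fun _ a ↦ a)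
      fun i s _ ↦ nullMeasurable i s
  rw [← ofReal_measureReal]
  refine ENNReal.ofReal_le_ofReal
    ((measureReal_le_abs_le_of_hasSubgaussianMGF subgaussian ht).trans_eq ?_)
  have variance_proxy : 2 * ((∑ _i : Fin N, (γ / N / 2) ^ 2 : ℝ≥0) : ℝ) = γ ^ 2 / (2 * N) := by
    simp only [sum_const, card_univ, Fintype.card_fin, nsmul_eq_mul, NNReal.coe_mul,
      NNReal.coe_natCast, NNReal.coe_pow, NNReal.coe_div, NNReal.coe_ofNat]
    field_simp
  rw [variance_proxy]
  congr 2
  field_simp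

/-- Concentration of the total variation distance via the bounded-differences
inequality: with `D = (1/2)·∑_x |p_x − p̃_x|` the total variation distance between
the target quasi-probability mixture `p` and the signed empirical estimator `p̃`
built from `N` i.i.d. samples, for every `t > 0`,
`P(|D − E[D]| ≥ t) ≤ 2·exp(−N·t²/(2γ²))`. -/
theorem tv_distance_concentration
    {ι : Type*} [Fintype ι] [DecidableEq ι] [MeasurableSpace ι]
    (pp pm : ι → ℝ)
    (hpp0 : ∀ x, 0 ≤ pp x) (hpp1 : ∑ x, pp x = 1)
    (hpm0 : ∀ x, 0 ≤ pm x) (hpm1 : ∑ x, pm x = 1)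
    (cp cm : ℝ) (hcp : 0 ≤ cp) (hcm : 0 ≤ cm) (hc : cp - cm = 1)
    (γ : ℝ) (hγ : γ = cp + cm)
    (p : ι → ℝ) (hp : ∀ x, p x = cp * pp x - cm * pm x)
    (hp0 : ∀ x, 0 ≤ p x)
    (q : ι → ℝ) (hq : ∀ x, q x = (cp * pp x + cm * pm x) / γ)
    (μ1 : Measure (ι × Bool)) [IsProbabilityMeasure μ1]
    (hμt : ∀ x, μ1 {(x, true)} = ENNReal.ofReal (cp * pp x / γ))
    (hμf : ∀ x, μ1 {(x, false)} = ENNReal.ofReal (cm * pm x / γ))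
    (N : ℕ) (hN : 0 < N)
    (D : (Fin N → ι × Bool) → ℝ)
    (hD : ∀ ω, D ω = (1 / 2) * ∑ x, |p x - (γ / N) *
        ∑ i, (if (ω i).1 = x then (if (ω i).2 then (1 : ℝ) else -1) else 0)|)
    (t : ℝ) (ht : 0 < t) :
    (Measure.pi fun _ : Fin N => μ1)
        {ω | |D ω - ∫ ω', D ω' ∂(Measure.pi fun _ : Fin N => μ1)| ≥ t}
      ≤ ENNReal.ofReal (2 * Real.exp (-(N : ℝ) * t ^ 2 / (2 * γ ^ 2))) := by
  have hγ0 : 0 < γ := by linarith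
  have hμ : ∑ a, μ1 {a} = 1 :=
    sum_measure_singleton_eq_one_of_signed_mixture hpp0 hpp1 hpm0 hpm1 hcp hcm hγ hγ0 hμt hμf
  obtain rfl : D = fun ω ↦ tvDist p (signedEmpirical γ ω) := funext hD
  refine (tv_distance_concentration_general p hγ0 hN _ (fun _ ↦ hμ) ht.le).trans ?_
  have hr : 0 ≤ N * t ^ 2 / γ ^ 2 := by positivity
  gcongr ENNReal.ofReal (2 * Real.exp ?_)
  calc -(2 * N * t ^ 2) / γ ^ 2 = -(2 * (N * t ^ 2 / γ ^ 2)) := by ring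
    _ ≤ -(N * t ^ 2 / γ ^ 2 / 2) := by linarith
    _ = -N * t ^ 2 / (2 * γ ^ 2) := by ring
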